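/- Let (G_i,u_i), i ∈ I, be a family of linearly ordered lattice-ordered groups, each u_i a strong unit of G_i; put u = (u_i)_{i∈I} and G = {g ∈ ∏_{i∈I} G_i : ∃ n ∈ ℕ, −n·u ≤ g ≤ n·u}, so that the pseudo MV-algebra M = Γ(G,u) is the direct product of the linearly ordered pseudo MV-algebras Γ(G_i,u_i). If M has a strict square root, then G is two-divisible, i.e., for every g ∈ G there is h ∈ G with h + h = g. -/

import Mathlib

section Core

variable {G : Type} [Lattice G] [AddGroup G]

/-- `u` is a strong unit of the ℓ-group `G`. -/
def IsStrongUnit (u : G) : Prop :=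
  0 ≤ u ∧ ∀ g : G, ∃ n : ℕ, 1 ≤ n ∧ g ≤ n • u

/-- Truncated addition `x ⊕ y = (x + y) ⊓ u` of the pseudo MV-algebra `Γ(G,u)`. -/
def oplus (u x y : G) : G := (x + y) ⊓ u

/-- Left negation `x⁻ = u - x`. -/
def negl (u x : G) : G := u - x

/-- Right negation `x~ = -x + u`. -/
def negr (u x : G) : G := -x + u

/-- `x ⊙ y = (x - u + y) ⊔ 0`. -/
def odot (u x y : G) : G := (x - u + y) ⊔ 0

/-- `r` is a square root on the pseudo MV-algebra `M = Γ(G,u)`: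
it maps `M` to `M` and satisfies (Sq1), (Sq2), (Sq3). -/
def IsSquareRoot (u : G) (r : G → G) : Prop :=
  (∀ x, 0 ≤ x → x ≤ u → 0 ≤ r x ∧ r x ≤ u) ∧
  (∀ x, 0 ≤ x → x ≤ u → odot u (r x) (r x) = x) ∧
  (∀ x y, 0 ≤ x → x ≤ u → 0 ≤ y → y ≤ u → odot u y y ≤ x → y ≤ r x) ∧
  (∀ x, 0 ≤ x → x ≤ u → r (negl u x) = oplus u (negl u (r x)) (r 0)) ∧
  (∀ x, 0 ≤ x → x ≤ u → r (negr u x) = oplus u (r 0) (negr u (r x)))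

/-- `r` is strict: `r 0 = r 0⁻`. -/
def IsStrict (u : G) (r : G → G) : Prop := r 0 = negl u (r 0)

end Core

/-- An additive structure is two-divisible if every element is `h + h` for some `h`. -/
def TwoDivisible (A : Type) [Add A] : Prop := ∀ g : A, ∃ h : A, h + h = g

/-!
Let `w = r 0`, so that `w + w = u`. Strictness removes the truncation in (Sq1) and (Sq3), and the
two identities force `r x` to commute with `w`; hence `r x - w` is a half of `x` for `0 ≤ x ≤ u`.
By (Sq2), `r x` is the largest `y` with `y ⊙ y ≤ x`, so it is fixed by conjugation with any element
commuting with `u` and `x`. A positive bounded element is a sum of commuting elements of `[0, u]`,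
built by the lattice operations from itself and `u`; the halves of the summands therefore commute
and can be added. A general bounded element is moved into the positive cone by adding `n • u`, whose
half is `n • w`. The argument takes place in an arbitrary ℓ-group.
-/

/-- `h` is a half of `g` commuting with every element that commutes with `u` and `g`. The second
clause makes the halves of commuting elements commute, so that they can be added. -/
def IsCommutingHalf {G : Type*} [AddMonoid G] (u g h : G) : Prop :=
  h + h = g ∧ ∀ c, AddCommute c u → AddCommute c g → AddCommute c h

theorem addCommute_sub {G : Type*} [AddGroup G] {a b c : G} (ha : AddCommute c a)
    (hb : AddCommute c b) : AddCommute c (a - b) :=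
  sub_eq_add_neg a b ▸ ha.add_right hb.neg_right

section LatticeOrderedGroup

variable {G : Type*} [Lattice G] [AddGroup G] [AddLeftMono G] [AddRightMono G]

theorem addCommute_inf {a b c : G} (ha : AddCommute c a) (hb : AddCommute c b) :
    AddCommute c (a ⊓ b) := by
  rw [AddCommute, AddSemiconjBy, add_inf, inf_add, ha.eq, hb.eq]

theorem addCommute_posPart {a c : G} (ha : AddCommute c a) : AddCommute c a⁺ := by
  rw [AddCommute, AddSemiconjBy, posPart_def, add_sup, sup_add, ha.eq, add_zero, zero_add]

theorem posPart_sub_add_inf (a b : G) : (a - b)⁺ + a ⊓ b = a := by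
  have inf_eq : a ⊓ b = -(a - b)⁺ + a := by
    rw [posPart_def, neg_sup, neg_sub, neg_zero, inf_add, sub_add_cancel, zero_add, inf_comm]
  rw [inf_eq, add_neg_cancel_left]

theorem le_nsmul_induction {u : G} (hu : 0 ≤ u) {p : G → Prop}
    (unit : ∀ x, 0 ≤ x → x ≤ u → p x)
    (step : ∀ g, p (g - u)⁺ → p (g ⊓ u) → p g)
    {n : ℕ} {g : G} (hg₀ : 0 ≤ g) (hgn : g ≤ n • u) : p g := by
  induction n generalizing g with
  | zero => exact unit g hg₀ ((hgn.trans_eq (zero_nsmul u)).trans hu)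
  | succ n ih =>
    have excess_le : (g - u)⁺ ≤ n • u :=
      sup_le (sub_le_iff_le_add.mpr (hgn.trans_eq (succ_nsmul u n))) (nsmul_nonneg hu n)
    exact step g (ih (posPart_nonneg _) excess_le) (unit _ (le_inf hg₀ hu) inf_le_right)

theorem le_of_add_self_le_add_self {a b : G} (hab : AddCommute a b) (h : a + a ≤ b + b) :
    a ≤ b := by
  have sub_add_sub : (b - a) + (b - a) = (b + b) - (a + a) := by
    simp only [← two_nsmul, sub_eq_add_neg, ← neg_nsmul, hab.symm.neg_right.add_nsmul]
  refine sub_nonneg.mp (nsmul_two_semiclosed ?_)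
  rw [two_nsmul, sub_add_sub]
  exact sub_nonneg.mpr h

theorem IsCommutingHalf.of_posPart_inf {u g a b : G} (hg : AddCommute g u)
    (ha : IsCommutingHalf u (g - u)⁺ a) (hb : IsCommutingHalf u (g ⊓ u) b) :
    IsCommutingHalf u g (a + b) := by
  obtain ⟨a_add_a, a_comm⟩ := ha
  obtain ⟨b_add_b, b_comm⟩ := hb
  have comm_posPart {c : G} (hcu : AddCommute c u) (hcg : AddCommute c g) :
      AddCommute c (g - u)⁺ := addCommute_posPart (addCommute_sub hcg hcu)
  have comm_inf {c : G} (hcu : AddCommute c u) (hcg : AddCommute c g) :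
      AddCommute c (g ⊓ u) := addCommute_inf hcg hcu
  have hag : AddCommute a g := (a_comm g hg (comm_posPart hg (.refl g))).symm
  have hau : AddCommute a u := (a_comm u (.refl u) (comm_posPart (.refl u) hg.symm)).symm
  have hab : AddCommute a b := b_comm a hau (comm_inf hau hag)
  refine ⟨?_, fun c hcu hcg => ?_⟩
  · rw [hab.symm.add_add_add_comm, a_add_a, b_add_b, posPart_sub_add_inf]
  · exact (a_comm c hcu (comm_posPart hcu hcg)).add_right (b_comm c hcu (comm_inf hcu hcg))

end LatticeOrderedGroup

section StrictSquareRoot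

variable {G : Type} [AddGroup G] {u : G} {r : G → G}

theorem IsStrict.add_self (hs : IsStrict u r) : r 0 + r 0 = u :=
  eq_sub_iff_add_eq.mp hs

theorem IsStrict.addCommute_unit (hs : IsStrict u r) : AddCommute (r 0) u :=
  hs.add_self ▸ (AddCommute.refl (r 0)).add_right (.refl (r 0))

variable [Lattice G]

theorem IsSquareRoot.apply_zero_le (hr : IsSquareRoot u r) (hu : 0 ≤ u) {x : G} (hx₀ : 0 ≤ x)
    (hxu : x ≤ u) : r 0 ≤ r x := by
  obtain ⟨r_mem, odot_self, le_r, -⟩ := hr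
  obtain ⟨w_nonneg, w_le⟩ := r_mem 0 le_rfl hu
  exact le_r x (r 0) hx₀ hxu w_nonneg w_le ((odot_self 0 le_rfl hu).trans_le hx₀)

variable [AddLeftMono G]

theorem IsSquareRoot.apply_unit_sub (hr : IsSquareRoot u r) (hu : 0 ≤ u) {x : G} (hx₀ : 0 ≤ x)
    (hxu : x ≤ u) : r (u - x) = u - r x + r 0 := by
  have apply_negl := hr.2.2.2.1
  have untruncated : u - r x + r 0 ≤ u :=
    calc u - r x + r 0 ≤ u - r x + r x := add_le_add_right (hr.apply_zero_le hu hx₀ hxu) _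
      _ = u := sub_add_cancel u (r x)
  exact (apply_negl x hx₀ hxu).trans (inf_eq_left.mpr untruncated)

variable [AddRightMono G]

theorem odot_conj {c : G} (hc : AddCommute c u) (x y : G) :
    odot u (c + x - c) (c + y - c) = c + odot u x y - c := by
  have conj_sub_add : c + x - c - u + (c + y - c) = c + (x - u + y) - c := by
    have cancel_conj : -c - u + c = -u := by
      rw [sub_eq_add_neg, hc.neg_left.neg_right.eq, neg_add_cancel_right]
    calc c + x - c - u + (c + y - c) = c + x + (-c - u + c) + y - c := by
          simp only [sub_eq_add_neg, add_assoc]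
      _ = c + (x - u + y) - c := by
          rw [cancel_conj]; simp only [sub_eq_add_neg, add_assoc]
  rw [odot, odot, conj_sub_add, add_sup, sup_sub, add_zero, sub_self]

theorem IsSquareRoot.conj_le (hr : IsSquareRoot u r) {x c : G} (hx₀ : 0 ≤ x) (hxu : x ≤ u)
    (hcu : AddCommute c u) (hcx : AddCommute c x) : c + r x - c ≤ r x := by
  obtain ⟨r_mem, odot_self, le_r, -⟩ := hr
  obtain ⟨rx_nonneg, rx_le⟩ := r_mem x hx₀ hxu
  apply le_r x _ hx₀ hxu
  · simpa only [add_zero, sub_self] using sub_le_sub_right (add_le_add_right rx_nonneg c) c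
  · simpa only [hcu.eq, add_sub_cancel_right] using
      sub_le_sub_right (add_le_add_right rx_le c) c
  · rw [odot_conj hcu, odot_self x hx₀ hxu, hcx.eq, add_sub_cancel_right]

theorem IsSquareRoot.addCommute_apply (hr : IsSquareRoot u r) {x c : G} (hx₀ : 0 ≤ x)
    (hxu : x ≤ u) (hcu : AddCommute c u) (hcx : AddCommute c x) : AddCommute c (r x) := by
  have conj_le := hr.conj_le hx₀ hxu hcu hcx
  have conj_neg_le := hr.conj_le hx₀ hxu hcu.neg_left hcx.neg_left
  rw [sub_neg_eq_add, add_assoc, neg_add_le_iff_le_add] at conj_neg_le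
  exact le_antisymm (sub_le_iff_le_add.mp conj_le) conj_neg_le

theorem IsSquareRoot.apply_sub_unit_add_apply (hr : IsSquareRoot u r) (hs : IsStrict u r)
    (hu : 0 ≤ u) {x : G} (hx₀ : 0 ≤ x) (hxu : x ≤ u) : r x - u + r x = x := by
  have w_le := hr.apply_zero_le hu hx₀ hxu
  have untruncated : 0 ≤ r x - u + r x :=
    calc 0 = r 0 - u + r 0 := by rw [← hs.add_self, sub_add_cancel_right, neg_add_cancel]
      _ ≤ r x - u + r x := add_le_add (sub_le_sub_right w_le u) w_le
  exact (sup_eq_left.mpr untruncated).symm.trans (hr.2.1 x hx₀ hxu)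

theorem IsSquareRoot.addCommute_apply_apply_zero (hr : IsSquareRoot u r) (hs : IsStrict u r)
    (hu : 0 ≤ u) {x : G} (hx₀ : 0 ≤ x) (hxu : x ≤ u) : AddCommute (r x) (r 0) := by
  have r_x := hr.apply_sub_unit_add_apply hs hu hx₀ hxu
  have r_compl := hr.apply_sub_unit_add_apply hs hu (sub_nonneg.mpr hxu)
    (sub_le_self u hx₀)
  rw [hr.apply_unit_sub hu hx₀ hxu] at r_compl
  have cancelled : r 0 - r x + r 0 = u - r x := by
    apply add_left_cancel (a := u - r x)
    calc u - r x + (r 0 - r x + r 0) = u - r x + r 0 - u + (u - r x + r 0) := by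
          simp only [sub_eq_add_neg, add_assoc, neg_add_cancel_left]
      _ = u - x := r_compl
      _ = u - r x + (u - r x) := by
          nth_rw 1 [← r_x]
          simp only [sub_eq_add_neg, neg_add_rev, neg_neg, add_assoc]
  rw [← hs.add_self, sub_eq_add_neg, sub_eq_add_neg, add_assoc, add_assoc] at cancelled
  exact AddCommute.neg_left_iff.mp (add_left_cancel cancelled)

theorem IsSquareRoot.isCommutingHalf (hr : IsSquareRoot u r) (hs : IsStrict u r) (hu : 0 ≤ u)
    {x : G} (hx₀ : 0 ≤ x) (hxu : x ≤ u) : IsCommutingHalf u x (r x - r 0) := by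
  have hcomm := hr.addCommute_apply_apply_zero hs hu hx₀ hxu
  refine ⟨?_, fun c hcu hcx => ?_⟩
  · calc r x - r 0 + (r x - r 0) = r x - r 0 + (-r 0 + r x) := by
          rw [sub_eq_add_neg (r x), hcomm.neg_right.eq]
      _ = r x - u + r x := by
          rw [← hs.add_self]; simp only [sub_eq_add_neg, neg_add_rev, add_assoc]
      _ = x := hr.apply_sub_unit_add_apply hs hu hx₀ hxu
  · exact addCommute_sub (hr.addCommute_apply hx₀ hxu hcu hcx)
      (hr.addCommute_apply le_rfl hu hcu (.zero_right c))

theorem IsSquareRoot.addCommute_apply_zero (hr : IsSquareRoot u r) (hs : IsStrict u r)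
    (hu : 0 ≤ u) {n : ℕ} {g : G} (hg₀ : 0 ≤ g) (hgn : g ≤ n • u) : AddCommute (r 0) g := by
  refine le_nsmul_induction hu (fun x hx₀ hxu => ?_) (fun g hpos hinf => ?_) hg₀ hgn
  · have hcomm := (hr.addCommute_apply_apply_zero hs hu hx₀ hxu).symm
    rw [← hr.apply_sub_unit_add_apply hs hu hx₀ hxu]
    exact (addCommute_sub hcomm hs.addCommute_unit).add_right hcomm
  · exact posPart_sub_add_inf g u ▸ hpos.add_right hinf

theorem IsSquareRoot.exists_isCommutingHalf (hr : IsSquareRoot u r) (hs : IsStrict u r)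
    (hu : 0 ≤ u) {n : ℕ} {g : G} (hg₀ : 0 ≤ g) (hgn : g ≤ n • u) :
    ∃ h, IsCommutingHalf u g h := by
  have hgu : AddCommute g u := by
    have hcomm := (hr.addCommute_apply_zero hs hu hg₀ hgn).symm
    exact hs.add_self ▸ hcomm.add_right hcomm
  refine le_nsmul_induction hu (p := fun g => AddCommute g u → ∃ h, IsCommutingHalf u g h)
    (fun x hx₀ hxu _ => ⟨_, hr.isCommutingHalf hs hu hx₀ hxu⟩) (fun g hpos hinf hgu => ?_)
    hg₀ hgn hgu
  obtain ⟨a, ha⟩ := hpos (addCommute_posPart (addCommute_sub hgu.symm (.refl u))).symm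
  obtain ⟨b, hb⟩ := hinf (addCommute_inf hgu.symm (.refl u)).symm
  exact ⟨a + b, ha.of_posPart_inf hgu hb⟩

theorem IsSquareRoot.exists_add_self_eq (hr : IsSquareRoot u r) (hs : IsStrict u r)
    (hu : 0 ≤ u) {n : ℕ} {g : G} (hng : -(n • u) ≤ g) (hgn : g ≤ n • u) :
    ∃ h, h + h = g ∧ AddCommute h (r 0) := by
  have shift_nonneg : 0 ≤ g + n • u := neg_le_iff_add_nonneg.mp hng
  have shift_le : g + n • u ≤ (n + n) • u :=
    (add_le_add_left hgn _).trans_eq (add_nsmul u n n).symm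
  obtain ⟨k, k_add_k, k_comm⟩ := hr.exists_isCommutingHalf hs hu shift_nonneg shift_le
  have hkw : AddCommute k (r 0) :=
    (k_comm _ hs.addCommute_unit (hr.addCommute_apply_zero hs hu shift_nonneg shift_le)).symm
  have hknw : AddCommute (-(n • r 0)) k := (hkw.symm.nsmul_left n).neg_left
  refine ⟨k - n • r 0, ?_, (addCommute_sub hkw.symm ((AddCommute.refl (r 0)).nsmul_right n)).symm⟩
  calc k - n • r 0 + (k - n • r 0) = k + k - (n • r 0 + n • r 0) := by
        simp only [sub_eq_add_neg, neg_add_rev, hknw.add_add_add_comm]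
    _ = g := by
        rw [k_add_k, ← (AddCommute.refl (r 0)).add_nsmul, hs.add_self, add_sub_cancel_right]

theorem stmt_4_general (hu : 0 ≤ u) (hr : IsSquareRoot u r) (hs : IsStrict u r) {n : ℕ} {g : G}
    (hng : -(n • u) ≤ g) (hgn : g ≤ n • u) :
    ∃ h, (-(n • u) ≤ h ∧ h ≤ n • u) ∧ h + h = g := by
  obtain ⟨h, h_add_h, hcomm⟩ := hr.exists_add_self_eq hs hu hng hgn
  have hnw : n • r 0 + n • r 0 = n • u := by
    rw [← (AddCommute.refl (r 0)).add_nsmul, hs.add_self]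
  have hcomm_nw : AddCommute h (n • r 0) := hcomm.nsmul_right n
  have nw_le : n • r 0 ≤ n • u := nsmul_le_nsmul_right (hr.1 0 le_rfl hu).2 n
  have le_nw : h ≤ n • r 0 :=
    le_of_add_self_le_add_self hcomm_nw (by rwa [h_add_h, hnw])
  have neg_nw_le : -(n • r 0) ≤ h :=
    le_of_add_self_le_add_self hcomm_nw.neg_right.symm (by rwa [← neg_add_rev, hnw, h_add_h])
  exact ⟨h, ⟨(neg_le_neg_iff.mpr nw_le).trans neg_nw_le, le_nw.trans nw_le⟩, h_add_h⟩

end StrictSquareRoot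

/-- if the direct product `M = Γ(G,u)` of linearly ordered pseudo MV-algebras
`Γ(K i, v i)` has a strict square root, then
`G = {g ∈ ∏ K i : ∃ n, -n•v ≤ g ≤ n•v}` is two-divisible. -/
theorem stmt_4 {ι : Type} (K : ι → Type)
    [∀ i, AddGroup (K i)] [∀ i, LinearOrder (K i)]
    [∀ i, CovariantClass (K i) (K i) (· + ·) (· ≤ ·)]
    [∀ i, CovariantClass (K i) (K i) (Function.swap (· + ·)) (· ≤ ·)]
    (v : ∀ i, K i) (hv : ∀ i, IsStrongUnit (v i))
    (r : (∀ i, K i) → (∀ i, K i))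
    (hr : IsSquareRoot v r) (hs : IsStrict v r)
    (g : ∀ i, K i) (hg : ∃ n : ℕ, ∀ i, -(n • v i) ≤ g i ∧ g i ≤ n • v i) :
    ∃ h : ∀ i, K i, (∃ n : ℕ, ∀ i, -(n • v i) ≤ h i ∧ h i ≤ n • v i) ∧ h + h = g := by
  have : AddLeftMono (∀ i, K i) := ⟨fun a _ _ hbc i => add_le_add_right (hbc i) (a i)⟩
  have : AddRightMono (∀ i, K i) := ⟨fun a _ _ hbc i => add_le_add_left (hbc i) (a i)⟩
  obtain ⟨n, hn⟩ := hg
  obtain ⟨h, ⟨hnh, hhn⟩, h_add_h⟩ :=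
    stmt_4_general (fun i => (hv i).1) hr hs (fun i => (hn i).1) (fun i => (hn i).2)
  exact ⟨h, ⟨n, fun i => ⟨hnh i, hhn i⟩⟩, h_add_h⟩
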